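/- Let C be an abelian category with enough projectives and injectives and X ⊆ C an (n+2)-rigid functorially finite subcategory with X^{⊥_{≤ n+1}} = ^{⊥_{≤ n+1}}X. Write R = X^{⊥_{≤ n+1}}, viewed as an exact category with the inherited exact structure. Then for all M, N ∈ R and all 1 ≤ i ≤ n+1, the i-th extension group computed in the exact category R is naturally isomorphic to Ext^i_C(M, N). -/

import Mathlib

open CategoryTheory CategoryTheory.Limits CategoryTheory.Abelian

universe w v u

variable {C : Type u} [Category.{v} C] [Abelian C] [HasExt.{w} C]

/-- The right orthogonal `X^{⊥_{≤ m}}`: objects `N` with `Ext^i(A, N) = 0` for all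
`A ∈ X` and `1 ≤ i ≤ m`. -/
def rightPerpLE (X : Set C) (m : ℕ) : Set C :=
  {N | ∀ A ∈ X, ∀ i : ℕ, 1 ≤ i → i ≤ m → Subsingleton (Abelian.Ext A N i)}

/-- The left orthogonal `^{⊥_{≤ m}}X`. -/
def leftPerpLE (X : Set C) (m : ℕ) : Set C :=
  {M | ∀ A ∈ X, ∀ i : ℕ, 1 ≤ i → i ≤ m → Subsingleton (Abelian.Ext M A i)}

/-- `X` is `m+1`-rigid: `Ext^i(X, X') = 0` for all `X, X' ∈ X`, `1 ≤ i ≤ m`. -/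
def IsRigidLE (X : Set C) (m : ℕ) : Prop :=
  ∀ A ∈ X, ∀ B ∈ X, ∀ i : ℕ, 1 ≤ i → i ≤ m → Subsingleton (Abelian.Ext A B i)

/-- `g : A ⟶ M` is a right `X`-approximation (an `X`-precover) of `M`. -/
def IsPrecover (X : Set C) {A M : C} (g : A ⟶ M) : Prop :=
  A ∈ X ∧ ∀ A' ∈ X, ∀ h : A' ⟶ M, ∃ t : A' ⟶ A, t ≫ g = h

/-- `f : M ⟶ A` is a left `X`-approximation (an `X`-preenvelope) of `M`. -/
def IsPreenvelope (X : Set C) {A M : C} (f : M ⟶ A) : Prop :=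
  A ∈ X ∧ ∀ A' ∈ X, ∀ h : M ⟶ A', ∃ t : A ⟶ A', f ≫ t = h

/-- `X` is precovering in the full subcategory `D`. -/
def IsPrecoveringIn (D X : Set C) : Prop :=
  ∀ M ∈ D, ∃ (A : C) (g : A ⟶ M), IsPrecover X g

/-- `X` is preenveloping in the full subcategory `D`. -/
def IsPreenvelopingIn (D X : Set C) : Prop :=
  ∀ M ∈ D, ∃ (A : C) (f : M ⟶ A), IsPreenvelope X f

/-- `addClosure S` is the closure of `S` under finite direct sums and direct summands. -/
inductive addClosure (S : Set C) : C → Prop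
  | of {A : C} (h : A ∈ S) : addClosure S A
  | zero (O : C) (h : IsZero O) : addClosure S O
  | biprod {A B : C} : addClosure S A → addClosure S B → addClosure S (A ⊞ B)
  | retract {A B : C} (i : A ⟶ B) (r : B ⟶ A) (hir : i ≫ r = 𝟙 A) :
      addClosure S B → addClosure S A

/-- The class of projective objects of `C`, as a set. -/
def projSet : Set C := {P | Projective P}

/-- The class of injective objects of `C`, as a set. -/
def injSet : Set C := {I | Injective I}

/-- The projective objects of an extension-closed subcategory `R` (with the exact structure
inherited from `C`): objects `P ∈ R` with `Ext^1(P, N) = 0` (computed in `C`) for all `N ∈ R`. -/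
def projIn (R : Set C) : Set C :=
  {P | P ∈ R ∧ ∀ N ∈ R, Subsingleton (Abelian.Ext P N 1)}

/-- The injective objects of an extension-closed subcategory `R`. -/
def injIn (R : Set C) : Set C :=
  {I | I ∈ R ∧ ∀ N ∈ R, Subsingleton (Abelian.Ext N I 1)}

/-! Let `R = X^{⊥_{≤ n+1}}` and suppose that `R` contains the projectives of `C`. An `X`-precover of
`P ∈ R` together with an epimorphism from a projective `Q` gives an epimorphism `A ⊞ Q ⟶ P` whose
kernel again lies in `R`. If `P` is projective in `R`, this epimorphism splits, so `P` is a direct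
summand of `A ⊞ Q`, and therefore all the groups `Ext^k_C(P, N)` with `N ∈ R` and `1 ≤ k ≤ n+1`
vanish. The long exact sequences of the syzygy conflations then show that the Yoneda product with
their extension classes is an isomorphism. -/

section Perp

lemma rightPerpLE_antitone (X : Set C) : Antitone (rightPerpLE X) :=
  fun _ _ hmm' _ hN A hA i hi him => hN A hA i hi (him.trans hmm')

lemma subset_leftPerpLE_rightPerpLE (X : Set C) (m : ℕ) : X ⊆ leftPerpLE (rightPerpLE X m) m :=
  fun A hA _ hN i hi him => hN A hA i hi him

lemma projSet_subset_leftPerpLE (Y : Set C) (m : ℕ) : projSet ⊆ leftPerpLE Y m := by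
  rintro P (hP : Projective P) B - (_ | i) hi -
  · omega
  · exact Ext.subsingleton_of_projective P B i

lemma biprod_mem_rightPerpLE {X : Set C} {m : ℕ} {A B : C} (hA : A ∈ rightPerpLE X m)
    (hB : B ∈ rightPerpLE X m) : (A ⊞ B) ∈ rightPerpLE X m := by
  intro T hT i hi him
  have := hA T hT i hi him
  have := hB T hT i hi him
  exact Ext.addEquivBiprod.toEquiv.subsingleton

lemma biprod_mem_leftPerpLE {Y : Set C} {m : ℕ} {A B : C} (hA : A ∈ leftPerpLE Y m)
    (hB : B ∈ leftPerpLE Y m) : (A ⊞ B) ∈ leftPerpLE Y m := by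
  intro T hT i hi him
  have := hA T hT i hi him
  have := hB T hT i hi him
  exact Ext.biprodAddEquiv.toEquiv.subsingleton

lemma mem_leftPerpLE_of_retract {Y : Set C} {m : ℕ} {A B : C} (s : A ⟶ B) (r : B ⟶ A)
    (hsr : s ≫ r = 𝟙 A) (hB : B ∈ leftPerpLE Y m) : A ∈ leftPerpLE Y m := by
  intro T hT i hi him
  have hBT := hB T hT i hi him
  refine subsingleton_of_forall_eq 0 fun x => ?_
  calc x = (Ext.mk₀ s).comp ((Ext.mk₀ r).comp x (zero_add i)) (zero_add i) := by
        rw [Ext.mk₀_comp_mk₀_assoc, hsr, Ext.mk₀_id_comp]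
    _ = 0 := by rw [hBT.elim ((Ext.mk₀ r).comp x (zero_add i)) 0, Ext.comp_zero]

lemma addClosure.mem_leftPerpLE {S Y : Set C} {m : ℕ} (hS : S ⊆ leftPerpLE Y m) {A : C}
    (hA : addClosure S A) : A ∈ leftPerpLE Y m := by
  induction hA with
  | of h => exact hS h
  | zero O h => exact projSet_subset_leftPerpLE Y m h.projective
  | biprod _ _ ihA ihB => exact biprod_mem_leftPerpLE ihA ihB
  | retract s r hsr _ ih => exact mem_leftPerpLE_of_retract s r hsr ih

end Perp

section Projectives

variable {X : Set C}

lemma left_mem_rightPerpLE_of_shortExact {m : ℕ} {S : ShortComplex C} (hS : S.ShortExact)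
    (hlift : ∀ A ∈ X, ∀ h : A ⟶ S.X₃, ∃ t : A ⟶ S.X₂, t ≫ S.g = h)
    (h₂ : S.X₂ ∈ rightPerpLE X (m + 1)) (h₃ : S.X₃ ∈ rightPerpLE X m) :
    S.X₁ ∈ rightPerpLE X (m + 1) := by
  rintro A hA (_ | k) hk hkm
  · omega
  have surjective_postcomp (y : Ext A S.X₃ k) :
      ∃ z : Ext A S.X₂ k, z.comp (Ext.mk₀ S.g) (add_zero k) = y := by
    rcases Nat.eq_zero_or_pos k with rfl | hkpos
    · obtain ⟨h, rfl⟩ := (Ext.mk₀_bijective A S.X₃).2 y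
      obtain ⟨t, rfl⟩ := hlift A hA h
      exact ⟨Ext.mk₀ t, Ext.mk₀_comp_mk₀ t S.g⟩
    · exact ⟨0, (h₃ A hA k hkpos (by omega)).elim _ _⟩
  refine subsingleton_of_forall_eq 0 fun x => ?_
  obtain ⟨y, rfl⟩ := Ext.covariant_sequence_exact₁ A hS x ((h₂ A hA _ hk hkm).elim _ _) rfl
  obtain ⟨z, rfl⟩ := surjective_postcomp y
  rw [Ext.comp_assoc_of_second_deg_zero, hS.comp_extClass, Ext.comp_zero]

lemma exists_section_of_subsingleton_ext {S : ShortComplex C} (hS : S.ShortExact)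
    (h : Subsingleton (Ext S.X₃ S.X₁ 1)) : ∃ s : S.X₃ ⟶ S.X₂, s ≫ S.g = 𝟙 S.X₃ := by
  obtain ⟨x, hx⟩ :=
    Ext.covariant_sequence_exact₃ S.X₃ hS (Ext.mk₀ (𝟙 S.X₃)) (zero_add 1) (h.elim _ _)
  obtain ⟨s, rfl⟩ := (Ext.mk₀_bijective S.X₃ S.X₂).2 x
  rw [Ext.mk₀_comp_mk₀] at hx
  exact ⟨s, (Ext.mk₀_bijective _ _).1 hx⟩

lemma kernel_biprod_desc_mem_rightPerpLE {m : ℕ} (hrigid : IsRigidLE X (m + 1))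
    {A Q M : C} {a : A ⟶ M} (ha : IsPrecover X a) (q : Q ⟶ M) [Epi q]
    (hQ : Q ∈ rightPerpLE X (m + 1)) (hM : M ∈ rightPerpLE X m) :
    kernel (biprod.desc a q) ∈ rightPerpLE X (m + 1) := by
  obtain ⟨hA, hlift⟩ := ha
  have hS : (ShortComplex.mk _ _ (kernel.condition (biprod.desc a q))).ShortExact :=
    { exact := ShortComplex.exact_kernel _ }
  refine left_mem_rightPerpLE_of_shortExact hS (fun B hB h => ?_)
    (biprod_mem_rightPerpLE (fun B hB => hrigid B hB A hA) hQ) hM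
  obtain ⟨t, rfl⟩ := hlift B hB h
  exact ⟨t ≫ biprod.inl, by simp⟩

lemma addClosure_of_mem_projIn [EnoughProjectives C] {m : ℕ} (hrigid : IsRigidLE X (m + 1))
    (hprec : IsPrecoveringIn (rightPerpLE X (m + 1)) X) (hproj : projSet ⊆ rightPerpLE X (m + 1))
    {P : C} (hP : P ∈ projIn (rightPerpLE X (m + 1))) : addClosure (X ∪ projSet) P := by
  obtain ⟨hPR, hPext⟩ := hP
  obtain ⟨A, a, ha⟩ := hprec P hPR
  let g : A ⊞ Projective.over P ⟶ P := biprod.desc a (Projective.π P)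
  have hS : (ShortComplex.mk _ _ (kernel.condition g)).ShortExact :=
    { exact := ShortComplex.exact_kernel g }
  have hQ : Projective.over P ∈ projSet := Projective.projective_over P
  have hK : kernel g ∈ rightPerpLE X (m + 1) :=
    kernel_biprod_desc_mem_rightPerpLE hrigid ha (Projective.π P) (hproj hQ)
      (rightPerpLE_antitone X m.le_succ hPR)
  obtain ⟨s, hs⟩ := exists_section_of_subsingleton_ext hS (hPext _ hK)
  exact .retract s g hs (.biprod (.of (.inl ha.1)) (.of (.inr hQ)))

lemma projIn_subset_leftPerpLE [EnoughProjectives C] {m : ℕ} (hrigid : IsRigidLE X (m + 1))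
    (hprec : IsPrecoveringIn (rightPerpLE X (m + 1)) X)
    (hproj : projSet ⊆ rightPerpLE X (m + 1)) :
    projIn (rightPerpLE X (m + 1)) ⊆ leftPerpLE (rightPerpLE X (m + 1)) (m + 1) :=
  fun _ hP => (addClosure_of_mem_projIn hrigid hprec hproj hP).mem_leftPerpLE
    (Set.union_subset (subset_leftPerpLE_rightPerpLE X _) (projSet_subset_leftPerpLE _ _))

end Projectives

section Syzygies

lemma precomp_extClass_bijective {S : ShortComplex C} (hS : S.ShortExact) (N : C) {k l : ℕ}
    (hl : 1 + k = l) (hX₂k : Subsingleton (Ext S.X₂ N k)) (hX₂l : Subsingleton (Ext S.X₂ N l)) :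
    Function.Bijective (hS.extClass.precomp N hl) := by
  refine ⟨(injective_iff_map_eq_zero _).2 fun x hx => ?_, fun x => ?_⟩
  · obtain ⟨y, rfl⟩ := Ext.contravariant_sequence_exact₁ hS N x hl hx
    rw [hX₂k.elim y 0, Ext.comp_zero]
  · exact Ext.contravariant_sequence_exact₃ hS N x (hX₂l.elim _ _) hl

/-- `Ms 1, …, Ms t` are iterated syzygies of `Ms 0` with respect to the class `𝓟`: there are short
exact sequences `0 ⟶ Ms (j + 1) ⟶ P ⟶ Ms j ⟶ 0` with `P ∈ 𝓟` for all `j < t`. The objects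
`Ms j` with `j > t` are unconstrained. -/
def IsSyzygyChain (𝓟 : Set C) (t : ℕ) (Ms : ℕ → C) : Prop :=
  ∀ j < t, ∃ P ∈ 𝓟, ∃ (f : Ms (j + 1) ⟶ P) (g : P ⟶ Ms j) (w : f ≫ g = 0),
    (ShortComplex.mk f g w).ShortExact

lemma IsSyzygyChain.exists_bijective_precomp {Y : Set C} {m t : ℕ} {Ms : ℕ → C}
    (hMs : IsSyzygyChain (leftPerpLE Y m) t Ms) :
    ∃ θ : Ext (Ms 0) (Ms t) t, ∀ N ∈ Y, ∀ {k l : ℕ} (hl : t + k = l), 1 ≤ k → l ≤ m →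
      Function.Bijective (θ.precomp N hl) := by
  induction t with
  | zero =>
    refine ⟨Ext.mk₀ (𝟙 _), fun N _ k l hl _ _ => ?_⟩
    obtain rfl : k = l := by omega
    have hid : ⇑((Ext.mk₀ (𝟙 (Ms 0))).precomp N hl) = id := funext fun x => Ext.mk₀_id_comp x
    exact hid ▸ Function.bijective_id
  | succ t ih =>
    obtain ⟨θ, hθ⟩ := ih fun j hj => hMs j (by omega)
    obtain ⟨P, hP, f, g, w, hS⟩ := hMs t t.lt_succ_self
    refine ⟨θ.comp hS.extClass rfl, fun N hN k l hl hk hlm => ?_⟩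
    have hcomp : ⇑((θ.comp hS.extClass rfl).precomp N hl) =
        θ.precomp N (by omega : t + (1 + k) = l) ∘ hS.extClass.precomp N rfl :=
      funext fun x => Ext.comp_assoc θ hS.extClass x rfl rfl (by omega)
    rw [hcomp]
    exact (hθ N hN _ (by omega) hlm).comp (precomp_extClass_bijective hS N rfl
      (hP N hN k hk (by omega)) (hP N hN (1 + k) (by omega) (by omega)))

end Syzygies

theorem stmt15_general [EnoughProjectives C] {X : Set C} {n : ℕ} (hrigid : IsRigidLE X (n + 1))
    (hprec : IsPrecoveringIn (rightPerpLE X (n + 1)) X)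
    (hproj : projSet ⊆ rightPerpLE X (n + 1)) {Ms : ℕ → C} {t : ℕ}
    (hMs : IsSyzygyChain (projIn (rightPerpLE X (n + 1))) t Ms) :
    ∃ θ : Ext (Ms 0) (Ms t) t, ∀ N ∈ rightPerpLE X (n + 1), ∀ {k l : ℕ} (hl : t + k = l),
      1 ≤ k → l ≤ n + 1 → Function.Bijective (θ.precomp N hl) :=
  IsSyzygyChain.exists_bijective_precomp fun j hj =>
    let ⟨P, hP, hS⟩ := hMs j hj
    ⟨P, projIn_subset_leftPerpLE hrigid hprec hproj hP, hS⟩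

/-- Proposition 4.5: with `R = X^{⊥_{≤ n+1}}` the reduction of `C` at `X`, for all
`M, N ∈ R` and `1 ≤ i ≤ n+1`, the `i`-th extension group in the exact category `R`,
computed as `Ext^1(Ω_R^{i-1} M, N)` via any chain of syzygy conflations in `R` with
projective-in-`R` middle terms, is isomorphic to `Ext^i_C(M, N)`. -/
theorem stmt15 [EnoughProjectives C] [EnoughInjectives C] (X : Set C) (n : ℕ)
    (hrigid : IsRigidLE X (n + 1))
    (hprec : IsPrecoveringIn (Set.univ : Set C) X)
    (hpreenv : IsPreenvelopingIn (Set.univ : Set C) X)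
    (heq : rightPerpLE X (n + 1) = leftPerpLE X (n + 1))
    (M N : C) (hM : M ∈ rightPerpLE X (n + 1)) (hN : N ∈ rightPerpLE X (n + 1))
    (i : ℕ) (hi1 : 1 ≤ i) (hi2 : i ≤ n + 1)
    (Ms : ℕ → C) (hMs0 : Ms 0 = M)
    (hMsR : ∀ j ≤ i - 1, Ms j ∈ rightPerpLE X (n + 1))
    (hsyz : ∀ j < i - 1,
      ∃ P ∈ projIn (rightPerpLE X (n + 1)),
        ∃ (f : Ms (j + 1) ⟶ P) (g : P ⟶ Ms j) (w : f ≫ g = 0),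
          (ShortComplex.mk f g w).ShortExact) :
    Nonempty (Abelian.Ext (Ms (i - 1)) N 1 ≃+ Abelian.Ext M N i) := by
  subst hMs0
  obtain ⟨θ, hθ⟩ := stmt15_general hrigid (fun L _ => hprec L trivial)
    (heq ▸ projSet_subset_leftPerpLE X (n + 1)) hsyz
  exact ⟨.ofBijective _ (hθ N hN (Nat.sub_add_cancel hi1) le_rfl hi2)⟩
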